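/- arXiv:2311.01709 — 3 statements merged into one kernel-verified Lean document; each statement's English description precedes it below -/
import Mathlib

section
/- Let s ≥ 1 and let E = (E₁, …, E_s) be a random vector in ℝ^s whose coordinates are independent standard Gaussian random variables, and let a > 0. Then the conditional covariance matrix of E given the event {‖E‖² ≤ a} equals v_a · I_s, where I_s is the s × s identity matrix and v_a = F_{χ²_{s+2}}(a) / F_{χ²_s}(a). Equivalently: E[E_i E_j · 1{‖E‖² ≤ a}] = 0 for i ≠ j, and E[E_i² | ‖E‖² ≤ a] = F_{χ²_{s+2}}(a) / F_{χ²_s}(a) for every i. -/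
open MeasureTheory ProbabilityTheory

/-- The standard Gaussian measure on `ℝ^s`, with i.i.d. standard Gaussian coordinates. -/
noncomputable def stdGaussianPi (s : ℕ) : Measure (Fin s → ℝ) :=
  Measure.pi fun _ : Fin s => gaussianReal 0 1

/-- The chi-squared distribution with `k` degrees of freedom: the Gamma distribution with
shape `k/2` and rate `1/2`. -/
noncomputable def chiSqMeasure (k : ℕ) : Measure ℝ :=
  gammaMeasure (k / 2 : ℝ) (1 / 2 : ℝ)

/-- The CDF of the chi-squared distribution with `k` degrees of freedom at `a`: the measure it
assigns to `[0, a]`. -/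
noncomputable def chiSqCDF (k : ℕ) (a : ℝ) : ℝ :=
  (chiSqMeasure k (Set.Icc 0 a)).toReal

/-!
By reflection in a coordinate hyperplane the truncated off-diagonal moments vanish. By
exchangeability of the coordinates, `s` times a truncated second moment is the integral of `y`
over `[0, a]` against the law of `‖E‖²`, and that law is `χ²_s`: the square of a standard Gaussian
is a Gamma variable of shape `1/2`, and independent Gamma variables of equal rate add their shapes.
Both facts are read off moment generating functions, which determine a finite measure on `ℝ` by
analytic continuation from the real to the imaginary axis. Finally, multiplying a Gamma density of
shape `k/2` and rate `1/2` by `y` gives `k` times the one of shape `k/2 + 1`, so the integral is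
`s F_{χ²_{s+2}}(a)`.
-/

section MomentGeneratingFunction

open Filter Topology

lemma zero_mem_interior_integrableExpSet_of_mgf_ne_zero {Ω : Type*} {mΩ : MeasurableSpace Ω}
    {P : Measure Ω} {X : Ω → ℝ} (h : ∀ᶠ t in 𝓝 0, mgf X P t ≠ 0) :
    0 ∈ interior (integrableExpSet X P) := by
  rw [mem_interior_iff_mem_nhds]
  filter_upwards [h] with t ht
  exact not_imp_comm.1 mgf_undef ht

-- As `mgf` is `0` where `exp (t * x)` is not integrable, `hμ` says that it is integrable near `0`.
theorem eq_of_mgf_eventuallyEq {μ ν : Measure ℝ} [IsFiniteMeasure μ] [IsFiniteMeasure ν]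
    (hμ : ∀ᶠ t in 𝓝 0, mgf id μ t ≠ 0) (h : mgf id μ =ᶠ[𝓝 0] mgf id ν) : μ = ν := by
  have hν : ∀ᶠ t in 𝓝 0, mgf id ν t ≠ 0 := (hμ.and h).mono fun t ht => ht.2 ▸ ht.1
  let S := interior (integrableExpSet id μ) ∩ interior (integrableExpSet id ν)
  have h0 : (0 : ℝ) ∈ S := ⟨zero_mem_interior_integrableExpSet_of_mgf_ne_zero hμ,
    zero_mem_interior_integrableExpSet_of_mgf_ne_zero hν⟩
  have hS : IsPreconnected {z : ℂ | z.re ∈ S} :=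
    ((convex_integrableExpSet.interior.inter convex_integrableExpSet.interior).linear_preimage
      Complex.reLm).isPreconnected
  have hreal : Tendsto ((↑) : ℝ → ℂ) (𝓝[≠] 0) (𝓝[≠] 0) :=
    tendsto_nhdsWithin_iff.2 ⟨
      (Complex.continuous_ofReal.tendsto' 0 0 rfl).mono_left nhdsWithin_le_nhds,
      eventually_mem_nhdsWithin.mono fun t ht => by simpa using ht⟩
  have hmgf : ∀ᶠ t : ℝ in 𝓝[≠] 0, complexMGF id μ t = complexMGF id ν t :=
    (h.filter_mono nhdsWithin_le_nhds).mono fun t ht => by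
      rw [complexMGF_ofReal, complexMGF_ofReal, ht]
  have heq : Set.EqOn (complexMGF id μ) (complexMGF id ν) {z : ℂ | z.re ∈ S} :=
    (analyticOnNhd_complexMGF.mono fun _ hz => hz.1).eqOn_of_preconnected_of_frequently_eq
      (analyticOnNhd_complexMGF.mono fun _ hz => hz.2) hS (z₀ := 0) (by simpa using h0)
      (hreal.frequently hmgf.frequently)
  refine Measure.ext_of_charFun <| funext fun t => ?_
  rw [← complexMGF_id_mul_I, ← complexMGF_id_mul_I]
  exact heq (by simpa using h0)

end MomentGeneratingFunction

section GammaDistribution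

variable {a r : ℝ}

lemma ae_nonneg_gammaMeasure (a r : ℝ) : ∀ᵐ x ∂gammaMeasure a r, 0 ≤ x := by
  have hneg : gammaMeasure a r (Set.Iio 0) = 0 := by
    rw [gammaMeasure, withDensity_apply _ measurableSet_Iio, lintegral_gammaPDF_of_nonpos le_rfl]
  rw [ae_iff]
  simp only [not_le]
  exact hneg

lemma gammaMeasure_Icc_zero (a r x : ℝ) :
    gammaMeasure a r (Set.Icc 0 x) = gammaMeasure a r (Set.Iic x) := by
  refine measure_congr ?_
  filter_upwards [ae_nonneg_gammaMeasure a r] with y hy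
  exact propext (and_iff_right hy)

lemma integral_gammaMeasure_eq_integral_smul {F : Type*} [NormedAddCommGroup F] [NormedSpace ℝ F]
    (ha : 0 < a) (hr : 0 < r) (f : ℝ → F) :
    ∫ x, f x ∂gammaMeasure a r = ∫ x, gammaPDFReal a r x • f x := by
  have hmeas : Measurable (gammaPDF a r) := (measurable_gammaPDFReal a r).ennreal_ofReal
  rw [gammaMeasure, integral_withDensity_eq_integral_toReal_smul hmeas
    (ae_of_all _ fun _ => ENNReal.ofReal_lt_top)]
  simp only [gammaPDF, ENNReal.toReal_ofReal (gammaPDFReal_nonneg ha hr _)]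

lemma integral_gammaPDFReal (ha : 0 < a) (hr : 0 < r) : ∫ x, gammaPDFReal a r x = 1 := by
  have := isProbabilityMeasure_gammaMeasure ha hr
  simpa using (integral_gammaMeasure_eq_integral_smul ha hr fun _ => (1 : ℝ)).symm

lemma gammaPDFReal_mul_exp (hr : 0 ≤ r) {t : ℝ} (ht : t < r) (x : ℝ) :
    gammaPDFReal a r x * Real.exp (t * x) =
      (r / (r - t)) ^ a * gammaPDFReal a (r - t) x := by
  have hrt : 0 < r - t := sub_pos.2 ht
  have hexp : Real.exp (-((r - t) * x)) = Real.exp (-(r * x)) * Real.exp (t * x) := by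
    rw [← Real.exp_add]
    ring_nf
  unfold gammaPDFReal
  split_ifs
  · rw [hexp, Real.div_rpow hr hrt.le]
    field_simp
  · simp only [zero_mul, mul_zero]

lemma gammaPDFReal_mul_self (ha : 0 < a) (hr : 0 < r) (x : ℝ) :
    gammaPDFReal a r x * x = a / r * gammaPDFReal (a + 1) r x := by
  unfold gammaPDFReal
  split_ifs with hx
  · have hpow : x ^ (a + 1 - 1) = x ^ (a - 1) * x := by
      rw [← Real.rpow_add_one' hx (by simpa using ha.ne')]
      ring_nf
    rw [hpow, Real.Gamma_add_one ha.ne', Real.rpow_add_one hr.ne']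
    field_simp
  · simp only [zero_mul, mul_zero]

lemma mgf_id_gammaMeasure (ha : 0 < a) (hr : 0 < r) {t : ℝ} (ht : t < r) :
    mgf id (gammaMeasure a r) t = (r / (r - t)) ^ a := by
  simp only [mgf, id, integral_gammaMeasure_eq_integral_smul ha hr, smul_eq_mul,
    gammaPDFReal_mul_exp hr.le ht, integral_const_mul,
    integral_gammaPDFReal ha (sub_pos.2 ht), mul_one]

lemma eq_gammaMeasure_of_mgf_id {μ : Measure ℝ} [IsFiniteMeasure μ] (ha : 0 < a) (hr : 0 < r)
    (h : ∀ t < r, mgf id μ t = (r / (r - t)) ^ a) : μ = gammaMeasure a r := by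
  have := isProbabilityMeasure_gammaMeasure ha hr
  refine eq_of_mgf_eventuallyEq ?_ ?_ <;> filter_upwards [Iio_mem_nhds hr] with t ht
  · rw [h t ht]
    exact (Real.rpow_pos_of_pos (div_pos hr (sub_pos.2 ht)) a).ne'
  · rw [h t ht, mgf_id_gammaMeasure ha hr ht]

lemma setIntegral_id_gammaMeasure (ha : 0 < a) (hr : 0 < r) {B : Set ℝ} (hB : MeasurableSet B) :
    ∫ x in B, x ∂gammaMeasure a r = a / r * (gammaMeasure (a + 1) r).real B := by
  rw [← integral_indicator_one hB, ← integral_indicator hB,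
    integral_gammaMeasure_eq_integral_smul ha hr,
    integral_gammaMeasure_eq_integral_smul (by positivity) hr, ← integral_const_mul]
  refine integral_congr_ae (ae_of_all _ fun x => ?_)
  by_cases hx : x ∈ B
  · simp [hx, gammaPDFReal_mul_self ha hr]
  · simp [hx]

theorem map_sum_pi_gammaMeasure {ι : Type*} [Fintype ι] [Nonempty ι] {a : ι → ℝ}
    (ha : ∀ i, 0 < a i) (hr : 0 < r) :
    (Measure.pi fun i => gammaMeasure (a i) r).map (fun x => ∑ i, x i) =
      gammaMeasure (∑ i, a i) r := by
  have := fun i => isProbabilityMeasure_gammaMeasure (ha i) hr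
  refine eq_gammaMeasure_of_mgf_id
    (Finset.sum_pos (fun i _ => ha i) Finset.univ_nonempty) hr fun t ht => ?_
  calc mgf id ((Measure.pi fun i => gammaMeasure (a i) r).map fun x => ∑ i, x i) t
      = ∫ x, ∏ i, Real.exp (t * x i) ∂Measure.pi fun i => gammaMeasure (a i) r := by
        rw [mgf_id_map (by fun_prop)]
        simp only [mgf, Finset.mul_sum, Real.exp_sum]
    _ = ∏ i, mgf id (gammaMeasure (a i) r) t :=
        integral_fintype_prod_eq_prod fun _ y => Real.exp (t * y)
    _ = (r / (r - t)) ^ ∑ i, a i := by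
        simp only [mgf_id_gammaMeasure (ha _) hr ht,
          Real.rpow_sum_of_pos (div_pos hr (sub_pos.2 ht))]

end GammaDistribution

section GaussianSquare

open scoped NNReal

variable {v : ℝ≥0}

theorem map_sq_gaussianReal (hv : v ≠ 0) :
    (gaussianReal 0 v).map (· ^ 2) = gammaMeasure (1 / 2) (1 / (2 * v)) := by
  refine eq_gammaMeasure_of_mgf_id (by norm_num) (by positivity) fun t _ => ?_
  have hpdf : ∀ x : ℝ, gaussianPDFReal 0 v x * Real.exp (t * x ^ 2) =
      (√(2 * Real.pi * v))⁻¹ * Real.exp (-(1 / (2 * v) - t) * x ^ 2) := fun x => by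
    rw [gaussianPDFReal, mul_assoc, ← Real.exp_add]
    ring_nf
  calc mgf id ((gaussianReal 0 v).map (· ^ 2)) t
      = ∫ x, gaussianPDFReal 0 v x * Real.exp (t * x ^ 2) := by
        rw [mgf_id_map (by fun_prop), mgf, integral_gaussianReal_eq_integral_smul hv]
        rfl
    _ = (√(2 * Real.pi * v))⁻¹ * √(Real.pi / (1 / (2 * v) - t)) := by
        simp only [hpdf, integral_const_mul, integral_gaussian]
    _ = √(1 / (2 * v) / (1 / (2 * v) - t)) := by
        rw [← Real.sqrt_inv, ← Real.sqrt_mul (by positivity)]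
        congr 1
        field_simp
    _ = (1 / (2 * v) / (1 / (2 * v) - t)) ^ (1 / 2 : ℝ) := Real.sqrt_eq_rpow _

theorem map_sum_sq_pi_gaussianReal {ι : Type*} [Fintype ι] [Nonempty ι] (hv : v ≠ 0) :
    (Measure.pi fun _ : ι => gaussianReal 0 v).map (fun x => ∑ i, x i ^ 2) =
      gammaMeasure (Fintype.card ι / 2) (1 / (2 * v)) := by
  have hsq : (Measure.pi fun _ : ι => gaussianReal 0 v).map (fun x i => x i ^ 2) =
      Measure.pi fun _ : ι => gammaMeasure (1 / 2) (1 / (2 * v)) := by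
    rw [Measure.pi_map_pi (f := fun _ y => y ^ 2) (by fun_prop)]
    simp only [map_sq_gaussianReal hv]
  calc (Measure.pi fun _ : ι => gaussianReal 0 v).map (fun x => ∑ i, x i ^ 2)
      = ((Measure.pi fun _ : ι => gaussianReal 0 v).map fun x i => x i ^ 2).map
          fun y => ∑ i, y i := by
        rw [Measure.map_map (by fun_prop) (by fun_prop)]
        rfl
    _ = gammaMeasure (∑ _ : ι, 1 / 2) (1 / (2 * v)) := by
        rw [hsq, map_sum_pi_gammaMeasure (fun _ => by norm_num) (by positivity)]
    _ = gammaMeasure (Fintype.card ι / 2) (1 / (2 * v)) := by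
        simp [div_eq_mul_inv]

end GaussianSquare

section ProductSymmetry

variable {ι : Type*} [Fintype ι] {F : Type*} [NormedAddCommGroup F] [NormedSpace ℝ F]

lemma setIntegral_pi_comp_eval_eq {α : Type*} [MeasurableSpace α] {μ : Measure α} [SigmaFinite μ]
    {T : Set (ι → α)} (hT : ∀ (σ : Equiv.Perm ι) (x : ι → α), x ∘ σ ∈ T ↔ x ∈ T)
    (f : α → F) (i j : ι) :
    ∫ x in T, f (x i) ∂Measure.pi (fun _ => μ) = ∫ x in T, f (x j) ∂Measure.pi (fun _ => μ) := by
  classical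
  let e := MeasurableEquiv.arrowCongr' (Equiv.swap i j) (MeasurableEquiv.refl α)
  have he : MeasurePreserving e (Measure.pi fun _ => μ) (Measure.pi fun _ => μ) :=
    measurePreserving_arrowCongr' (fun _ => μ) (fun _ => μ) (Equiv.swap i j)
      (MeasurableEquiv.refl α) fun _ => MeasurePreserving.id μ
  have hpre : e ⁻¹' T = T := Set.ext fun x => hT (Equiv.swap i j) x
  have hval : ∀ x, e x j = x i := fun x => congrArg x (Equiv.swap_apply_right i j)
  have hintegral := he.setIntegral_preimage_emb e.measurableEmbedding (fun x => f (x j)) T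
  simpa only [hpre, hval] using hintegral

lemma measurePreserving_pi_update_neg {α : Type*} [MeasurableSpace α] [Neg α] [MeasurableNeg α]
    [DecidableEq ι] (μ : ι → Measure α) [∀ k, SigmaFinite (μ k)] (i : ι) [(μ i).IsNegInvariant] :
    MeasurePreserving (fun x : ι → α => Function.update x i (-x i)) (Measure.pi μ)
      (Measure.pi μ) := by
  have hcoord : ∀ k, MeasurePreserving (Function.update (fun _ => id) i Neg.neg k) (μ k) (μ k) := by
    intro k
    obtain rfl | hk := eq_or_ne k i
    · simpa only [Function.update_self] using Measure.measurePreserving_neg (μ k)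
    · simpa only [Function.update_of_ne hk] using MeasurePreserving.id (μ k)
  convert measurePreserving_pi μ μ hcoord using 1
  ext x k
  obtain rfl | hk := eq_or_ne k i
  · simp only [Function.update_self]
  · simp only [Function.update_of_ne hk, id]

lemma setIntegral_pi_eq_zero_of_update_neg {α : Type*} [MeasurableSpace α] [InvolutiveNeg α]
    [MeasurableNeg α] [DecidableEq ι] {μ : ι → Measure α} [∀ k, SigmaFinite (μ k)] (i : ι)
    [(μ i).IsNegInvariant] {T : Set (ι → α)} (hT : ∀ x, Function.update x i (-x i) ∈ T ↔ x ∈ T)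
    {f : (ι → α) → F} (hf : ∀ x, f (Function.update x i (-x i)) = -f x) :
    ∫ x in T, f x ∂Measure.pi μ = 0 := by
  let e : (ι → α) → ι → α := fun x => Function.update x i (-x i)
  have he : MeasurePreserving e (Measure.pi μ) (Measure.pi μ) :=
    measurePreserving_pi_update_neg μ i
  have hinv : Function.Involutive e := fun x => by simp [e]
  have hintegral := he.setIntegral_preimage_emb
    (MeasurableEquiv.ofInvolutive e hinv he.measurable).measurableEmbedding f T
  have hpre : e ⁻¹' T = T := Set.ext hT
  simp only [hpre, e, hf, integral_neg] at hintegral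
  have : IsAddTorsionFree F := .of_isTorsionFree ℝ F
  exact self_eq_neg.1 hintegral.symm

end ProductSymmetry

section TruncatedGaussian

open scoped NNReal

variable {ι : Type*} [Fintype ι] {v : ℝ≥0} {B : Set ℝ}

instance isNegInvariant_gaussianReal (v : ℝ≥0) : (gaussianReal 0 v).IsNegInvariant :=
  ⟨gaussianReal_map_neg.trans (by rw [neg_zero])⟩

theorem setIntegral_mul_pi_gaussianReal (v : ℝ≥0) (B : Set ℝ) {i j : ι} (hij : i ≠ j) :
    ∫ x in {x : ι → ℝ | ∑ k, x k ^ 2 ∈ B}, x i * x j ∂Measure.pi (fun _ => gaussianReal 0 v) =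
      0 := by
  classical
  refine setIntegral_pi_eq_zero_of_update_neg i (fun x => ?_) fun x => ?_
  · have hsq : ∀ k, Function.update x i (-x i) k ^ 2 = x k ^ 2 := fun k => by
      obtain rfl | hk := eq_or_ne k i
      · rw [Function.update_self, neg_sq]
      · rw [Function.update_of_ne hk]
    simp only [Set.mem_ofPred_eq, hsq]
  · rw [Function.update_self, Function.update_of_ne hij.symm, neg_mul]

lemma card_mul_setIntegral_sq_pi_gaussianReal (v : ℝ≥0) (hB : MeasurableSet B) (i : ι) :
    Fintype.card ι * ∫ x in {x : ι → ℝ | ∑ k, x k ^ 2 ∈ B}, x i ^ 2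
        ∂Measure.pi (fun _ => gaussianReal 0 v) =
      ∫ y in B, y ∂(Measure.pi fun _ : ι => gaussianReal 0 v).map (fun x => ∑ k, x k ^ 2) := by
  set P := Measure.pi fun _ : ι => gaussianReal 0 v
  set T := {x : ι → ℝ | ∑ k, x k ^ 2 ∈ B}
  have hperm : ∀ (σ : Equiv.Perm ι) (x : ι → ℝ), x ∘ σ ∈ T ↔ x ∈ T := fun σ x => by
    simp only [T, Set.mem_ofPred_eq, Function.comp_apply, Equiv.sum_comp σ fun k => x k ^ 2]
  have hintegrable : ∀ j, IntegrableOn (fun x : ι → ℝ => x j ^ 2) T P := fun j =>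
    (integrable_comp_eval (μ := fun _ : ι => gaussianReal 0 v) (f := fun y => y ^ 2)
      (memLp_id_gaussianReal 2).integrable_sq).integrableOn
  calc (Fintype.card ι : ℝ) * ∫ x in T, x i ^ 2 ∂P
      = ∑ j, ∫ x in T, x j ^ 2 ∂P := by
        simp only [setIntegral_pi_comp_eval_eq hperm (· ^ 2) _ i, P, Finset.sum_const,
          Finset.card_univ, nsmul_eq_mul]
    _ = ∫ x in T, ∑ j, x j ^ 2 ∂P := (integral_finsetSum _ fun j _ => hintegrable j).symm
    _ = ∫ y in B, y ∂P.map (fun x => ∑ k, x k ^ 2) :=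
        (setIntegral_map hB aestronglyMeasurable_id (Measurable.aemeasurable (by fun_prop))).symm

theorem setIntegral_sq_pi_gaussianReal (hv : v ≠ 0) (hB : MeasurableSet B) (i : ι) :
    ∫ x in {x : ι → ℝ | ∑ k, x k ^ 2 ∈ B}, x i ^ 2 ∂Measure.pi (fun _ => gaussianReal 0 v) =
      v * (gammaMeasure (Fintype.card ι / 2 + 1) (1 / (2 * v))).real B := by
  have : Nonempty ι := ⟨i⟩
  have hcard : (0 : ℝ) < Fintype.card ι := by exact_mod_cast Fintype.card_pos
  refine mul_left_cancel₀ hcard.ne' ?_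
  rw [card_mul_setIntegral_sq_pi_gaussianReal v hB i, map_sum_sq_pi_gaussianReal hv,
    setIntegral_id_gammaMeasure (by positivity) (by positivity) hB]
  field_simp

end TruncatedGaussian

section ChiSquared

variable {s : ℕ} {B : Set ℝ}

lemma chiSqCDF_eq_real_Iic (k : ℕ) (a : ℝ) : chiSqCDF k a = (chiSqMeasure k).real (Set.Iic a) :=
  congrArg ENNReal.toReal (gammaMeasure_Icc_zero _ _ a)

lemma stdGaussianPi_real_sum_sq_mem [NeZero s] (hB : MeasurableSet B) :
    (stdGaussianPi s).real {x | ∑ k, x k ^ 2 ∈ B} = (chiSqMeasure s).real B := by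
  have hlaw : (stdGaussianPi s).map (fun x => ∑ k, x k ^ 2) = chiSqMeasure s := by
    simpa [stdGaussianPi, chiSqMeasure] using
      map_sum_sq_pi_gaussianReal (ι := Fin s) one_ne_zero
  rw [← hlaw, map_measureReal_apply (by fun_prop) hB]
  rfl

lemma setIntegral_sq_stdGaussianPi (hB : MeasurableSet B) (i : Fin s) :
    ∫ x in {x : Fin s → ℝ | ∑ k, x k ^ 2 ∈ B}, x i ^ 2 ∂stdGaussianPi s =
      (chiSqMeasure (s + 2)).real B := by
  simpa [stdGaussianPi, chiSqMeasure, add_div] using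
    setIntegral_sq_pi_gaussianReal one_ne_zero hB i

end ChiSquared

/-- For a standard Gaussian vector `E` in `ℝ^s` (`s ≥ 1`) and `a > 0`, the
conditional covariance matrix of `E` given `{‖E‖² ≤ a}` is `v_a · I_s` with
`v_a = F_{χ²_{s+2}}(a) / F_{χ²_s}(a)`: the off-diagonal truncated moments vanish, and the
conditional second moment of every coordinate equals `v_a`. -/
theorem truncated_gaussian_covariance (s : ℕ) (hs : 1 ≤ s) (a : ℝ) (ha : 0 < a) :
    (∀ i j : Fin s, i ≠ j →
      ∫ x in {x : Fin s → ℝ | ∑ k, (x k) ^ 2 ≤ a}, x i * x j ∂(stdGaussianPi s) = 0) ∧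
    (∀ i : Fin s,
      (∫ x in {x : Fin s → ℝ | ∑ k, (x k) ^ 2 ≤ a}, (x i) ^ 2 ∂(stdGaussianPi s)) /
          (stdGaussianPi s {x : Fin s → ℝ | ∑ k, (x k) ^ 2 ≤ a}).toReal =
        chiSqCDF (s + 2) a / chiSqCDF s a) := by
  refine ⟨fun i j hij => setIntegral_mul_pi_gaussianReal 1 (Set.Iic a) hij, fun i => ?_⟩
  have : NeZero s := ⟨Nat.one_le_iff_ne_zero.1 hs⟩
  rw [chiSqCDF_eq_real_Iic, chiSqCDF_eq_real_Iic]
  exact congrArg₂ (· / ·) (setIntegral_sq_stdGaussianPi measurableSet_Iic i)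
    (stdGaussianPi_real_sum_sq_mem measurableSet_Iic)
end

section
/- Let s ≥ 1, let p ∈ (0, 1), and let a > 0 be any real number with F_{χ²_s}(a) = p (i.e., a is a p-quantile of the chi-squared distribution with s degrees of freedom). Then F_{χ²_{s+2}}(a) < p. -/
open MeasureTheory ProbabilityTheory

/-! The gamma densities `f_b` of a fixed rate `r` satisfy `f_{b+1}' = r * (f_b - f_{b+1})` on
`(0, ∞)` and `f_{b+1}(0) = 0`. Integrating this over `[0, x]` shows that raising the shape from `b`
to `b + 1` lowers the mass of `[0, x]` by exactly `f_{b+1}(x) / r > 0`. Two more degrees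
of freedom of a chi-squared distribution raise the gamma shape by one. -/

section Gamma

variable {b r x : ℝ}

lemma integrable_gammaPDFReal (hb : 0 < b) (hr : 0 < r) : Integrable (gammaPDFReal b r) := by
  refine (lintegral_ofReal_ne_top_iff_integrable
    (measurable_gammaPDFReal b r).aestronglyMeasurable
    (ae_of_all _ (gammaPDFReal_nonneg hb hr))).mp ?_
  exact (lintegral_gammaPDF_eq_one hb hr).trans_ne ENNReal.one_ne_top

lemma gammaMeasure_real_apply (hb : 0 < b) (hr : 0 < r) {t : Set ℝ} (ht : MeasurableSet t) :
    (gammaMeasure b r).real t = ∫ y in t, gammaPDFReal b r y := by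
  rw [measureReal_def, gammaMeasure, withDensity_apply _ ht,
    integral_eq_lintegral_of_nonneg_ae (ae_of_all _ (gammaPDFReal_nonneg hb hr))
      (measurable_gammaPDFReal b r).aestronglyMeasurable]
  rfl

lemma gammaMeasure_real_Icc_zero (hb : 0 < b) (hr : 0 < r) (hx : 0 ≤ x) :
    (gammaMeasure b r).real (Set.Icc 0 x) = ∫ y in 0..x, gammaPDFReal b r y := by
  rw [gammaMeasure_real_apply hb hr measurableSet_Icc, integral_Icc_eq_integral_Ioc,
    intervalIntegral.integral_of_le hx]

lemma gammaPDFReal_add_one_of_nonneg (hx : 0 ≤ x) :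
    gammaPDFReal (b + 1) r x =
      r ^ (b + 1) / Real.Gamma (b + 1) * x ^ b * Real.exp (-(r * x)) := by
  rw [gammaPDFReal, if_pos hx, add_sub_cancel_right]

lemma gammaPDFReal_add_one_zero (hb : b ≠ 0) : gammaPDFReal (b + 1) r 0 = 0 := by
  rw [gammaPDFReal_add_one_of_nonneg le_rfl, Real.zero_rpow hb, mul_zero, zero_mul]

lemma continuousOn_gammaPDFReal_add_one (hb : 0 ≤ b) :
    ContinuousOn (gammaPDFReal (b + 1) r) (Set.Ici 0) := by
  refine ContinuousOn.congr ?_ fun _ hy => gammaPDFReal_add_one_of_nonneg hy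
  fun_prop (disch := exact fun _ _ => Or.inr hb)

lemma hasDerivAt_gammaPDFReal_add_one (hb : 0 < b) (hr : r ≠ 0) (hx : 0 < x) :
    HasDerivAt (gammaPDFReal (b + 1) r)
      (r * (gammaPDFReal b r x - gammaPDFReal (b + 1) r x)) x := by
  have hpow : HasDerivAt (fun y : ℝ => y ^ b) (b * x ^ (b - 1)) x :=
    Real.hasDerivAt_rpow_const (Or.inl hx.ne')
  have hexp : HasDerivAt (fun y => Real.exp (-(r * y))) (Real.exp (-(r * x)) * -(r * 1)) x :=
    ((hasDerivAt_id x).const_mul r).neg.exp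
  have hformula : gammaPDFReal (b + 1) r =ᶠ[nhds x]
      fun y => r ^ (b + 1) / Real.Gamma (b + 1) * y ^ b * Real.exp (-(r * y)) :=
    (eventually_ge_nhds hx).mono fun _ => gammaPDFReal_add_one_of_nonneg
  refine (((hpow.const_mul _).mul hexp).congr_of_eventuallyEq hformula).congr_deriv ?_
  have hΓ : Real.Gamma b ≠ 0 := (Real.Gamma_pos_of_pos hb).ne'
  rw [gammaPDFReal_add_one_of_nonneg hx.le, gammaPDFReal, if_pos hx.le,
    Real.Gamma_add_one hb.ne', Real.rpow_add_one hr]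
  field_simp
  ring

lemma gammaMeasure_real_Icc_zero_sub_add_one (hb : 0 < b) (hr : 0 < r) (hx : 0 ≤ x) :
    (gammaMeasure b r).real (Set.Icc 0 x) - (gammaMeasure (b + 1) r).real (Set.Icc 0 x) =
      gammaPDFReal (b + 1) r x / r := by
  have hb' : 0 < b + 1 := by positivity
  have hint : IntervalIntegrable (gammaPDFReal b r) volume 0 x :=
    (integrable_gammaPDFReal hb hr).intervalIntegrable
  have hint' : IntervalIntegrable (gammaPDFReal (b + 1) r) volume 0 x :=
    (integrable_gammaPDFReal hb' hr).intervalIntegrable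
  rw [gammaMeasure_real_Icc_zero hb hr hx, gammaMeasure_real_Icc_zero hb' hr hx,
    ← intervalIntegral.integral_sub hint hint', eq_div_iff hr.ne', mul_comm,
    ← intervalIntegral.integral_const_mul,
    intervalIntegral.integral_eq_sub_of_hasDerivAt_of_le hx
      ((continuousOn_gammaPDFReal_add_one hb.le).mono Set.Icc_subset_Ici_self)
      (fun y hy => hasDerivAt_gammaPDFReal_add_one hb hr.ne' hy.1)
      ((hint.sub hint').const_mul r),
    gammaPDFReal_add_one_zero hb.ne', sub_zero]

lemma gammaMeasure_real_Icc_zero_add_one_lt (hb : 0 < b) (hr : 0 < r) (hx : 0 < x) :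
    (gammaMeasure (b + 1) r).real (Set.Icc 0 x) < (gammaMeasure b r).real (Set.Icc 0 x) := by
  rw [← sub_pos, gammaMeasure_real_Icc_zero_sub_add_one hb hr hx.le]
  exact div_pos (gammaPDFReal_pos (by positivity) hr hx) hr

end Gamma

lemma chiSqCDF_eq_gammaMeasure_real (k : ℕ) (x : ℝ) :
    chiSqCDF k x = (gammaMeasure (k / 2) (1 / 2)).real (Set.Icc 0 x) := rfl

/-- If `a > 0` is a `p`-quantile of the chi-squared distribution with `s ≥ 1` degrees
of freedom, i.e. `F_{χ²_s}(a) = p` with `p ∈ (0,1)`, then `F_{χ²_{s+2}}(a) < p`. -/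
theorem chiSqCDF_succ_succ_lt_of_quantile (s : ℕ) (hs : 1 ≤ s) (p : ℝ) (hp : p ∈ Set.Ioo 0 1)
    (a : ℝ) (ha : 0 < a) (hq : chiSqCDF s a = p) :
    chiSqCDF (s + 2) a < p := by
  have hshape : ((s + 2 : ℕ) : ℝ) / 2 = s / 2 + 1 := by
    push_cast
    ring
  rw [← hq, chiSqCDF_eq_gammaMeasure_real, chiSqCDF_eq_gammaMeasure_real, hshape]
  exact gammaMeasure_real_Icc_zero_add_one_lt (half_pos (Nat.cast_pos.mpr hs)) one_half_pos ha
end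

section
/- Consider a probability space carrying a random element X of a measurable space, integrable real random variables Y(0) and Y(1) (the potential outcomes), and a Bernoulli(p) random variable I with p ∈ (0, 1) that is independent of (X, Y(0), Y(1)). Let Y = I·Y(1) + (1 − I)·Y(0), let μ_l = E[Y(l) | σ(X)] for l = 0, 1, and define the influence-function statistic ψ = I(Y − μ₁)/p − (1 − I)(Y − μ₀)/(1 − p) + μ₁ − μ₀. Then E[ψ] = E[Y(1) − Y(0)] = τ, the average treatment effect. -/
open MeasureTheory ProbabilityTheory

/-- The Bernoulli distribution with parameter `p`, as a measure on `ℝ` giving mass `p` to `1`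
and mass `1 - p` to `0`. -/
noncomputable def bernoulliReal (p : ℝ) : Measure ℝ :=
  ENNReal.ofReal p • Measure.dirac 1 + ENNReal.ofReal (1 - p) • Measure.dirac 0

/-!
The residual `Y(l) - μ_l` has mean zero, and it is a function of `(X, Y(l))`, hence independent of
the treatment. So it stays centered after multiplication by `I` or `1 - I`, and both correction
terms of `ψ` have mean zero, leaving `E[μ₁ - μ₀] = E[Y(1) - Y(0)]`. Rescaling a correction keeps it
centered: this is the half of double robustness in which the outcome regressions are correct while
the propensity may be misspecified.
-/

lemma ae_bernoulliReal_eq_zero_or_one (p : ℝ) : ∀ᵐ x ∂bernoulliReal p, x = 0 ∨ x = 1 := by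
  rw [bernoulliReal, ae_add_measure_iff]
  constructor <;> refine Measure.ae_smul_measure ?_ _ <;> simp [ae_dirac_eq]

section Residual

variable {Ω E : Type*} {m mΩ : MeasurableSpace Ω} {P : Measure Ω}
  [NormedAddCommGroup E] [NormedSpace ℝ E] [CompleteSpace E]

lemma integral_sub_condExp_eq_zero (hm : m ≤ mΩ) [SigmaFinite (P.trim hm)] {Z : Ω → E}
    (hZ : Integrable Z P) : ∫ ω, (Z ω - (P[Z | m]) ω) ∂P = 0 := by
  rw [integral_sub hZ integrable_condExp, integral_condExp hm, sub_self]

variable [MeasurableSpace E] [BorelSpace E]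

lemma integral_smul_sub_condExp_eq_zero_of_indepFun (hm : m ≤ mΩ) [SigmaFinite (P.trim hm)]
    {J : Ω → ℝ} {Z : Ω → E} (hJ : AEStronglyMeasurable J P) (hZ : Integrable Z P)
    (hJZ : IndepFun J (fun ω => Z ω - (P[Z | m]) ω) P) :
    ∫ ω, J ω • (Z ω - (P[Z | m]) ω) ∂P = 0 := by
  rw [hJZ.integral_fun_smul_eq_smul_integral hJ (hZ.sub integrable_condExp).aestronglyMeasurable,
    integral_sub_condExp_eq_zero hm hZ, smul_zero]

lemma indepFun_sub_condExp_comap [SecondCountableTopology E] {α β : Type*} [MeasurableSpace α]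
    [MeasurableSpace β] {J : Ω → β} {X : Ω → α} {Z : Ω → E}
    (h : IndepFun J (fun ω => (X ω, Z ω)) P) :
    IndepFun J (fun ω => Z ω - (P[Z | MeasurableSpace.comap X inferInstance]) ω) P := by
  obtain ⟨g, hg, hgX⟩ := (stronglyMeasurable_condExp (μ := P) (f := Z)
    (m := MeasurableSpace.comap X inferInstance)).exists_eq_measurable_comp
  rw [hgX]
  exact h.comp measurable_id (measurable_snd.sub (hg.measurable.comp measurable_fst))

end Residual

section ObservedResidual

variable {Ω : Type*} {m mΩ : MeasurableSpace Ω} {P : Measure Ω} {J Y Z : Ω → ℝ}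

lemma mul_sub_ae_eq_mul_sub_of_ne_zero_imp_eq (hYZ : ∀ᵐ ω ∂P, J ω ≠ 0 → Y ω = Z ω) (f : Ω → ℝ) :
    (fun ω => J ω * (Y ω - f ω)) =ᵐ[P] fun ω => J ω * (Z ω - f ω) := by
  filter_upwards [hYZ] with ω hω
  by_cases hJω : J ω = 0
  · rw [hJω, zero_mul, zero_mul]
  · rw [hω hJω]

lemma integrable_mul_observed_sub_condExp (hJ : Integrable J P) (hZ : Integrable Z P)
    (hJZ : IndepFun J (fun ω => Z ω - (P[Z | m]) ω) P)
    (hYZ : ∀ᵐ ω ∂P, J ω ≠ 0 → Y ω = Z ω) :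
    Integrable (fun ω => J ω * (Y ω - (P[Z | m]) ω)) P :=
  (hJZ.integrable_mul hJ (hZ.sub integrable_condExp)).congr
    (mul_sub_ae_eq_mul_sub_of_ne_zero_imp_eq hYZ _).symm

lemma integral_mul_observed_sub_condExp_eq_zero (hm : m ≤ mΩ) [SigmaFinite (P.trim hm)]
    (hJ : AEStronglyMeasurable J P) (hZ : Integrable Z P)
    (hJZ : IndepFun J (fun ω => Z ω - (P[Z | m]) ω) P)
    (hYZ : ∀ᵐ ω ∂P, J ω ≠ 0 → Y ω = Z ω) :
    ∫ ω, J ω * (Y ω - (P[Z | m]) ω) ∂P = 0 :=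
  (integral_congr_ae (mul_sub_ae_eq_mul_sub_of_ne_zero_imp_eq hYZ _)).trans
    (integral_smul_sub_condExp_eq_zero_of_indepFun hm hJ hZ hJZ)

end ObservedResidual

lemma integrable_of_ae_eq_zero_or_one {Ω : Type*} [MeasurableSpace Ω] {P : Measure Ω}
    [IsFiniteMeasure P] {I : Ω → ℝ} (hI : AEStronglyMeasurable I P)
    (hI01 : ∀ᵐ ω ∂P, I ω = 0 ∨ I ω = 1) : Integrable I P := by
  refine Integrable.of_bound hI 1 ?_
  filter_upwards [hI01] with ω hω
  rcases hω with h | h <;> simp [h]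

theorem aipw_unbiased_general {Ω : Type*} {m mΩ : MeasurableSpace Ω} {P : Measure Ω}
    [IsFiniteMeasure P] (hm : m ≤ mΩ) {I Y Y0 Y1 : Ω → ℝ}
    (hY0 : Integrable Y0 P) (hY1 : Integrable Y1 P)
    (hI : AEStronglyMeasurable I P) (hI01 : ∀ᵐ ω ∂P, I ω = 0 ∨ I ω = 1)
    (hindep0 : IndepFun I (fun ω => Y0 ω - (P[Y0 | m]) ω) P)
    (hindep1 : IndepFun I (fun ω => Y1 ω - (P[Y1 | m]) ω) P)
    (hY : ∀ᵐ ω ∂P, Y ω = I ω * Y1 ω + (1 - I ω) * Y0 ω) (w0 w1 : ℝ) :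
    ∫ ω, (w1 * (I ω * (Y ω - (P[Y1 | m]) ω)) - w0 * ((1 - I ω) * (Y ω - (P[Y0 | m]) ω))
      + (P[Y1 | m]) ω - (P[Y0 | m]) ω) ∂P = ∫ ω, (Y1 ω - Y0 ω) ∂P := by
  have hIint : Integrable I P := integrable_of_ae_eq_zero_or_one hI hI01
  have hJint : Integrable (fun ω => 1 - I ω) P := (integrable_const 1).sub hIint
  have hJindep : IndepFun (fun ω => 1 - I ω) (fun ω => Y0 ω - (P[Y0 | m]) ω) P :=
    hindep0.comp (measurable_const.sub measurable_id) measurable_id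
  have observed_treated : ∀ᵐ ω ∂P, I ω ≠ 0 → Y ω = Y1 ω := by
    filter_upwards [hI01, hY] with ω hω hYω
    rcases hω with h | h <;> simp [hYω, h]
  have observed_control : ∀ᵐ ω ∂P, 1 - I ω ≠ 0 → Y ω = Y0 ω := by
    filter_upwards [hI01, hY] with ω hω hYω
    rcases hω with h | h <;> simp [hYω, h]
  have treated_int : Integrable (fun ω => w1 * (I ω * (Y ω - (P[Y1 | m]) ω))) P :=
    (integrable_mul_observed_sub_condExp hIint hY1 hindep1 observed_treated).const_mul w1
  have control_int : Integrable (fun ω => w0 * ((1 - I ω) * (Y ω - (P[Y0 | m]) ω))) P :=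
    (integrable_mul_observed_sub_condExp hJint hY0 hJindep observed_control).const_mul w0
  have corrections_int := treated_int.sub' control_int
  rw [integral_sub (corrections_int.fun_add integrable_condExp) integrable_condExp,
    integral_add corrections_int integrable_condExp,
    integral_sub treated_int control_int, integral_const_mul, integral_const_mul,
    integral_mul_observed_sub_condExp_eq_zero hm hI hY1 hindep1 observed_treated,
    integral_mul_observed_sub_condExp_eq_zero hm hJint.aestronglyMeasurable hY0 hJindep
      observed_control,
    integral_condExp hm, integral_condExp hm, integral_sub hY1 hY0]
  ring

/-- In a randomized experiment with covariate `X`, integrable potential outcomes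
`Y(0), Y(1)`, and Bernoulli(`p`) treatment indicator `I` independent of `(X, Y(0), Y(1))`, the
AIPW influence-function statistic
`ψ = I(Y − μ₁)/p − (1 − I)(Y − μ₀)/(1 − p) + μ₁ − μ₀`, built with `Y = I·Y(1) + (1 − I)·Y(0)`
and `μ_l = E[Y(l) | σ(X)]`, satisfies `E[ψ] = E[Y(1) − Y(0)] = τ`. -/
theorem aipw_unbiased {Ω α : Type*} [MeasurableSpace Ω] [MeasurableSpace α]
    (P : Measure Ω) [IsProbabilityMeasure P]
    (X : Ω → α) (hX : Measurable X)
    (Y0 Y1 : Ω → ℝ) (hY0m : Measurable Y0) (hY1m : Measurable Y1)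
    (hY0 : Integrable Y0 P) (hY1 : Integrable Y1 P)
    (I : Ω → ℝ) (hI : Measurable I) (p : ℝ) (hp : p ∈ Set.Ioo (0 : ℝ) 1)
    (hdistI : Measure.map I P = bernoulliReal p)
    (hindep : IndepFun I (fun ω => (X ω, Y0 ω, Y1 ω)) P)
    (Y : Ω → ℝ) (hY : Y = fun ω => I ω * Y1 ω + (1 - I ω) * Y0 ω)
    (μ0 μ1 : Ω → ℝ)
    (hμ0 : μ0 = P[Y0|MeasurableSpace.comap X ‹MeasurableSpace α›])
    (hμ1 : μ1 = P[Y1|MeasurableSpace.comap X ‹MeasurableSpace α›])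
    (ψ : Ω → ℝ)
    (hψ : ψ = fun ω => I ω * (Y ω - μ1 ω) / p - (1 - I ω) * (Y ω - μ0 ω) / (1 - p)
        + μ1 ω - μ0 ω) :
    ∫ ω, ψ ω ∂P = ∫ ω, (Y1 ω - Y0 ω) ∂P := by
  have hI01 : ∀ᵐ ω ∂P, I ω = 0 ∨ I ω = 1 :=
    ae_of_ae_map hI.aemeasurable (hdistI ▸ ae_bernoulliReal_eq_zero_or_one p)
  have hindep0 : IndepFun I (fun ω => (X ω, Y0 ω)) P :=
    hindep.comp measurable_id (by fun_prop : Measurable fun t : α × ℝ × ℝ => (t.1, t.2.1))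
  have hindep1 : IndepFun I (fun ω => (X ω, Y1 ω)) P :=
    hindep.comp measurable_id (by fun_prop : Measurable fun t : α × ℝ × ℝ => (t.1, t.2.2))
  subst hψ hμ0 hμ1
  simpa only [div_eq_inv_mul] using
    aipw_unbiased_general hX.comap_le hY0 hY1 hI.aestronglyMeasurable hI01
      (indepFun_sub_condExp_comap hindep0) (indepFun_sub_condExp_comap hindep1)
      (ae_of_all P (congrFun hY)) (1 - p)⁻¹ p⁻¹
end
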